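/- Let F be a finite field with q elements of characteristic greater than 2, let k be a positive integer, and let 0 < ρ < 1/(k+1). Define g(m) = Σ_{j=1}^k m_j², Enc(m) = (m, g(m)) ∈ F^{k+1}, and Dec(m', y) = m' if y = g(m') and ⊥ otherwise. Then (Enc, Dec) is a weak (ρ, q^{ρ(k+1) − 1})-AMD code. -/

import Mathlib

open scoped Classical BigOperators

/-- Probability of an event `E` under a finitely supported probability mass function `p`. -/
noncomputable def pr {Ω : Type*} [Fintype Ω] (p : Ω → ℝ) (E : Ω → Prop) : ℝ :=
  ∑ ω : Ω, if E ω then p ω else 0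

/-- Min-entropy `H∞(X) = -log₂ max_x Pr[X = x]`. -/
noncomputable def minEntropy {Ω α : Type*} [Fintype Ω] [Fintype α]
    (p : Ω → ℝ) (X : Ω → α) : ℝ :=
  - Real.logb 2 (⨆ x : α, pr p (fun ω => X ω = x))

/-- Conditional (average) min-entropy
`H̃∞(X|Z) = -log₂ Σ_z Pr[Z=z] · max_x Pr[X=x | Z=z] = -log₂ Σ_z max_x Pr[X=x ∧ Z=z]`. -/
noncomputable def condMinEntropy {Ω α β : Type*} [Fintype Ω] [Fintype α] [Fintype β]
    (p : Ω → ℝ) (X : Ω → α) (Z : Ω → β) : ℝ :=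
  - Real.logb 2 (∑ z : β, ⨆ x : α, pr p (fun ω => X ω = x ∧ Z ω = z))

/-- A deterministic coding scheme `(Enc, Dec)` (codeword length `n` over an alphabet of
size `q`) is a weak `(ρ, δ)`-AMD code: for every probability space, every uniform
message `M`, every leakage `Z` (jointly distributed with `M`) satisfying
`H̃∞(Enc(M) | Z) ≥ H∞(Enc(M)) − ρ·n·log₂ q`, and every function `A : 𝒵 → C`,
`Pr[Dec(Enc(M) + A(Z)) ∉ {M, ⊥}] ≤ δ`. -/
def IsWeakAMD {Msg C : Type*} [Fintype Msg] [Fintype C] [Add C]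
    (Enc : Msg → C) (Dec : C → Option Msg) (n q : ℕ) (ρ δ : ℝ) : Prop :=
  ∀ (Ω : Type) [Fintype Ω] (p : Ω → ℝ),
    (∀ ω, 0 ≤ p ω) → (∑ ω : Ω, p ω) = 1 →
    ∀ (M : Ω → Msg),
      (∀ m : Msg, pr p (fun ω => M ω = m) = 1 / (Fintype.card Msg : ℝ)) →
      ∀ (ZS : Type) [Fintype ZS] (Z : Ω → ZS),
        condMinEntropy p (fun ω => Enc (M ω)) Z
          ≥ minEntropy p (fun ω => Enc (M ω)) - ρ * n * Real.logb 2 q →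
        ∀ (A : ZS → C),
          pr p (fun ω => Dec (Enc (M ω) + A (Z ω))
              ∉ ({some (M ω), none} : Set (Option Msg))) ≤ δ

/-!
The check symbol `Q m = ∑ j, m j ^ 2` is a nondegenerate quadratic form. Given `Z = z` the error is
a fixed shift `(a, b)`, and it deceives the decoder at `m` only if `a ≠ 0` and
`Q (m + a) = Q m + b`, that is `polar Q a m = b - Q a`. By nondegeneracy this is an affine
hyperplane, containing a fraction `1 / q` of the messages. The probability that `M` lies in a set of
at most `N` messages determined by `Z` is at most `N` times the probability of guessing `M` from
`Z`, which the entropy hypothesis bounds by `q ^ (ρ * n)` divided by the number of messages.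
-/

section Probability

variable {Ω α β γ : Type*} [Fintype Ω] {p : Ω → ℝ}

theorem pr_nonneg (hp : ∀ ω, 0 ≤ p ω) (E : Ω → Prop) : 0 ≤ pr p E :=
  Finset.sum_nonneg fun ω _ => ite_nonneg (hp ω) le_rfl

theorem pr_mem_eq_sum [Fintype β] (p : Ω → ℝ) (X : Ω → α) (Z : Ω → β) (B : β → Finset α) :
    pr p (fun ω => X ω ∈ B (Z ω)) = ∑ z, ∑ x ∈ B z, pr p (fun ω => X ω = x ∧ Z ω = z) := by
  unfold pr
  rw [Finset.sum_congr rfl fun z _ => Finset.sum_comm, Finset.sum_comm]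
  refine Finset.sum_congr rfl fun ω _ => ?_
  have hite (x : α) (z : β) [Decidable (X ω = x ∧ Z ω = z)] :
      (if X ω = x ∧ Z ω = z then p ω else 0) =
        if Z ω = z then if X ω = x then p ω else 0 else 0 := by
    split_ifs <;> tauto
  simp [hite]

/-- The optimal probability `∑_z max_x Pr[X = x ∧ Z = z]` of guessing `X` from `Z`, so that
`condMinEntropy p X Z = -log₂ (guessProb p X Z)`. -/
noncomputable def guessProb [Fintype β] (p : Ω → ℝ) (X : Ω → α) (Z : Ω → β) : ℝ :=
  ∑ z : β, ⨆ x : α, pr p (fun ω => X ω = x ∧ Z ω = z)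

theorem guessProb_nonneg [Fintype β] (hp : ∀ ω, 0 ≤ p ω) (X : Ω → α) (Z : Ω → β) :
    0 ≤ guessProb p X Z :=
  Finset.sum_nonneg fun _ _ => Real.iSup_nonneg fun _ => pr_nonneg hp _

theorem pr_mem_le_mul_guessProb [Finite α] [Fintype β] (hp : ∀ ω, 0 ≤ p ω) (X : Ω → α)
    (Z : Ω → β) {B : β → Finset α} {c : ℝ} (hB : ∀ z, ((B z).card : ℝ) ≤ c) :
    pr p (fun ω => X ω ∈ B (Z ω)) ≤ c * guessProb p X Z := by
  rw [pr_mem_eq_sum, guessProb, Finset.mul_sum]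
  refine Finset.sum_le_sum fun z _ => ?_
  set f : α → ℝ := fun x => pr p (fun ω => X ω = x ∧ Z ω = z)
  calc ∑ x ∈ B z, f x ≤ (B z).card • ⨆ x, f x :=
        Finset.sum_le_card_nsmul _ _ _ fun x _ => le_ciSup (Set.finite_range f).bddAbove x
    _ ≤ c * ⨆ x, f x := by
        rw [nsmul_eq_mul]
        exact mul_le_mul_of_nonneg_right (hB z) (Real.iSup_nonneg fun _ => pr_nonneg hp _)

theorem guessProb_le_two_rpow_neg_condMinEntropy [Fintype α] [Fintype β] (hp : ∀ ω, 0 ≤ p ω)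
    (X : Ω → α) (Z : Ω → β) : guessProb p X Z ≤ 2 ^ (-condMinEntropy p X Z) := by
  change _ ≤ 2 ^ (- -Real.logb 2 (guessProb p X Z))
  rcases (guessProb_nonneg hp X Z).eq_or_lt with h0 | hpos
  · rw [← h0]
    positivity
  · rw [neg_neg, Real.rpow_logb two_pos (by norm_num) hpos]

theorem iSup_pr_comp_of_injective [Finite α] [Finite γ] (hp : ∀ ω, 0 ≤ p ω) {f : α → γ}
    (hf : Function.Injective f) (X : Ω → α) (E : Ω → Prop) :
    ⨆ y, pr p (fun ω => f (X ω) = y ∧ E ω) = ⨆ x, pr p (fun ω => X ω = x ∧ E ω) := by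
  have hnonneg : 0 ≤ ⨆ x, pr p (fun ω => X ω = x ∧ E ω) :=
    Real.iSup_nonneg fun _ => pr_nonneg hp _
  apply le_antisymm
  · refine Real.iSup_le (fun y => ?_) hnonneg
    by_cases hy : ∃ x, f x = y
    · obtain ⟨x, rfl⟩ := hy
      simp only [hf.eq_iff]
      exact le_ciSup (f := fun x => pr p (fun ω => X ω = x ∧ E ω))
        (Set.finite_range _).bddAbove x
    · have hne : ∀ ω, f (X ω) ≠ y := fun ω h => hy ⟨X ω, h⟩
      simpa [pr, hne] using hnonneg
  · refine Real.iSup_le (fun x => ?_) (Real.iSup_nonneg fun _ => pr_nonneg hp _)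
    simp only [← hf.eq_iff (b := x)]
    exact le_ciSup (f := fun y => pr p (fun ω => f (X ω) = y ∧ E ω))
      (Set.finite_range _).bddAbove (f x)

theorem minEntropy_comp_of_injective [Fintype α] [Fintype γ] (hp : ∀ ω, 0 ≤ p ω) {f : α → γ}
    (hf : Function.Injective f) (X : Ω → α) :
    minEntropy p (fun ω => f (X ω)) = minEntropy p X := by
  simpa [minEntropy] using
    congrArg (fun t => -Real.logb 2 t) (iSup_pr_comp_of_injective hp hf X fun _ => True)

theorem condMinEntropy_comp_of_injective [Fintype α] [Fintype β] [Fintype γ]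
    (hp : ∀ ω, 0 ≤ p ω) {f : α → γ} (hf : Function.Injective f) (X : Ω → α) (Z : Ω → β) :
    condMinEntropy p (fun ω => f (X ω)) Z = condMinEntropy p X Z := by
  simp only [condMinEntropy, iSup_pr_comp_of_injective hp hf]

theorem minEntropy_of_uniform [Fintype α] [Nonempty α] {X : Ω → α}
    (hX : ∀ x, pr p (fun ω => X ω = x) = 1 / (Fintype.card α : ℝ)) :
    minEntropy p X = Real.logb 2 (Fintype.card α) := by
  simp [minEntropy, hX]

end Probability

section Codes

variable {Msg C : Type*} [Fintype Msg] [Add C]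

/-- The messages at which the error `e` goes undetected: decoding the tampered codeword yields a
wrong message, rather than the sent one or `⊥`. -/
noncomputable def undetected (Enc : Msg → C) (Dec : C → Option Msg) (e : C) : Finset Msg :=
  {m | Dec (Enc m + e) ∉ ({some m, none} : Set (Option Msg))}

theorem isWeakAMD_of_card_undetected_le [Nonempty Msg] [Fintype C] {Enc : Msg → C}
    (hEnc : Function.Injective Enc) {Dec : C → Option Msg} {ε : ℝ}
    (hε : ∀ e, ((undetected Enc Dec e).card : ℝ) ≤ ε * Fintype.card Msg)
    (n : ℕ) {q : ℕ} (hq : 0 < q) (ρ : ℝ) :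
    IsWeakAMD Enc Dec n q ρ (ε * (q : ℝ) ^ (ρ * n)) := by
  intro Ω _ p hp _ M hM ZS _ Z hZ A
  rw [condMinEntropy_comp_of_injective hp hEnc, minEntropy_comp_of_injective hp hEnc,
    minEntropy_of_uniform hM] at hZ
  set N : ℝ := (Fintype.card Msg : ℝ)
  have hN : 0 < N := by simp [N, Fintype.card_pos]
  have hq' : (0 : ℝ) < q := by exact_mod_cast hq
  have hguess : guessProb p M Z ≤ (q : ℝ) ^ (ρ * n) / N :=
    calc guessProb p M Z ≤ 2 ^ (-condMinEntropy p M Z) :=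
          guessProb_le_two_rpow_neg_condMinEntropy hp M Z
      _ ≤ 2 ^ (Real.logb 2 q * (ρ * n) - Real.logb 2 N) :=
          Real.rpow_le_rpow_of_exponent_le one_le_two (by linarith)
      _ = (q : ℝ) ^ (ρ * n) / N := by
          rw [Real.rpow_sub two_pos, Real.rpow_mul zero_le_two,
            Real.rpow_logb two_pos (by norm_num) hq', Real.rpow_logb two_pos (by norm_num) hN]
  have hεN : 0 ≤ ε * N := (Nat.cast_nonneg _).trans (hε (Enc (Classical.arbitrary Msg)))
  calc pr p (fun ω => Dec (Enc (M ω) + A (Z ω)) ∉ ({some (M ω), none} : Set (Option Msg)))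
      = pr p (fun ω => M ω ∈ undetected Enc Dec (A (Z ω))) := by simp [undetected]
    _ ≤ ε * N * guessProb p M Z :=
        pr_mem_le_mul_guessProb hp M Z (B := fun z => undetected Enc Dec (A z)) fun z => hε (A z)
    _ ≤ ε * N * ((q : ℝ) ^ (ρ * n) / N) := mul_le_mul_of_nonneg_left hguess hεN
    _ = ε * (q : ℝ) ^ (ρ * n) := by field_simp

end Codes

section SystematicCodes

variable {V W : Type*}

/-- The encoder of the systematic code with check function `g`: a message is followed by its
check symbol. -/
def systematicEnc (g : V → W) : V → V × W := fun m => (m, g m)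

/-- The decoder of the systematic code with check function `g`; `none` plays the role of `⊥`. -/
noncomputable def systematicDec (g : V → W) : V × W → Option V :=
  fun c => if c.2 = g c.1 then some c.1 else none

theorem systematicEnc_injective (g : V → W) : Function.Injective (systematicEnc g) :=
  fun _ _ h => congrArg Prod.fst h

theorem mem_undetected_systematic [Fintype V] [AddMonoid V] [IsLeftCancelAdd V] [Add W]
    {g : V → W} {m : V} {e : V × W} :
    m ∈ undetected (systematicEnc g) (systematicDec g) e ↔ e.1 ≠ 0 ∧ g m + e.2 = g (m + e.1) := by
  by_cases h : g m + e.2 = g (m + e.1) <;>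
    simp [undetected, systematicEnc, systematicDec, h]

end SystematicCodes

section QuadraticForms

open QuadraticMap

theorem card_fiber_mul_card_of_surjective {G H 𝓕 : Type*} [AddGroup G] [Fintype G] [AddMonoid H]
    [Fintype H] [FunLike 𝓕 G H] [AddMonoidHomClass 𝓕 G H] (f : 𝓕) (hf : Function.Surjective f)
    (y : H) :
    (Finset.univ.filter fun x => f x = y).card * Fintype.card H = Fintype.card G := by
  have hfib (y' : H) : (Finset.univ.filter fun x => f x = y').card =
      (Finset.univ.filter fun x => f x = y).card :=
    AddMonoidHom.card_fiber_eq_of_mem_range f (hf y') (hf y)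
  rw [← Finset.card_univ (α := G), Finset.card_eq_sum_card_fiberwise (s := Finset.univ) (f := f)
    (t := Finset.univ) fun _ _ => Finset.mem_univ _]
  simp [hfib, mul_comm]

variable {F V : Type*} [Field F] [Fintype F] [AddCommGroup V] [Module F V] [Fintype V]

theorem card_undetected_quadraticForm_le {Q : QuadraticForm F V}
    (hQ : (polarBilin Q).Nondegenerate) (e : V × F) :
    ((undetected (systematicEnc Q) (systematicDec Q) e).card : ℝ) ≤
      (Fintype.card F : ℝ)⁻¹ * Fintype.card V := by
  obtain ⟨a, b⟩ := e
  by_cases ha : a = 0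
  · have hempty : undetected (systematicEnc Q) (systematicDec Q) (a, b) = ∅ :=
      Finset.eq_empty_of_forall_notMem fun m hm => (mem_undetected_systematic.mp hm).1 ha
    rw [hempty, Finset.card_empty, Nat.cast_zero]
    positivity
  have hsurj : Function.Surjective (polarBilin Q a) :=
    LinearMap.surjective fun h => ha (hQ.1 a fun m => by rw [h, LinearMap.zero_apply])
  have hsub : undetected (systematicEnc Q) (systematicDec Q) (a, b) ⊆
      Finset.univ.filter fun m => polarBilin Q a m = b - Q a := by
    intro m hm
    have hshift : Q m + b = Q (m + a) := (mem_undetected_systematic.mp hm).2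
    have hpolar : polar Q a m = b - Q a := by
      rw [polar, add_comm a m, ← hshift]
      ring
    simpa using hpolar
  have hcard := card_fiber_mul_card_of_surjective (polarBilin Q a) hsurj (b - Q a)
  rw [le_inv_mul_iff₀ (by exact_mod_cast Fintype.card_pos), mul_comm]
  exact_mod_cast (Nat.mul_le_mul_right _ (Finset.card_le_card hsub)).trans hcard.le

theorem nondegenerate_polarBilin_sumSquares {ι K : Type*} [Fintype ι] [Field K]
    [NeZero (2 : K)] : (polarBilin (weightedSumSquares K (1 : ι → K))).Nondegenerate := by
  have : Invertible (2 : K) := invertibleOfNonzero two_ne_zero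
  rw [nondegenerate_polar_iff, nondegenerate_iff_radical_eq_bot,
    QuadraticForm.radical_weightedSumSquares]
  simp [Pi.spanSubset]

theorem coe_sumSquares (ι R : Type*) [Fintype ι] [CommSemiring R] :
    ⇑(weightedSumSquares R (1 : ι → R)) = fun v => ∑ i, v i ^ 2 := by
  ext v
  simp [weightedSumSquares_apply, pow_two]

theorem stmt11_general {Q : QuadraticForm F V} (hQ : (polarBilin Q).Nondegenerate) (ρ : ℝ) :
    IsWeakAMD (systematicEnc Q) (systematicDec Q) (Module.finrank F V + 1) (Fintype.card F) ρ
      ((Fintype.card F : ℝ) ^ (ρ * ((Module.finrank F V : ℝ) + 1) - 1)) := by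
  have hq : 0 < Fintype.card F := Fintype.card_pos
  have hAMD := isWeakAMD_of_card_undetected_le (systematicEnc_injective Q)
    (card_undetected_quadraticForm_le hQ) (Module.finrank F V + 1) hq ρ
  rwa [Nat.cast_add_one, inv_mul_eq_div, ← Real.rpow_sub_one (by exact_mod_cast hq.ne')] at hAMD

end QuadraticForms

/-- over a finite field of characteristic `> 2`, the coding scheme
`Enc(m) = (m, Σ_j m_j²)` with the natural decoder is a weak
`(ρ, q^{ρ(k+1) − 1})`-AMD code for any `0 < ρ < 1/(k+1)`. -/
theorem stmt11 {F : Type*} [Field F] [Fintype F] (hchar : 2 < ringChar F)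
    (k : ℕ) (hk : 0 < k) (ρ : ℝ) (hρ0 : 0 < ρ) (hρ1 : ρ < 1 / ((k : ℝ) + 1)) :
    IsWeakAMD
      (fun m : Fin k → F => ((m, ∑ j : Fin k, (m j) ^ 2) : (Fin k → F) × F))
      (fun c : (Fin k → F) × F =>
        if c.2 = ∑ j : Fin k, (c.1 j) ^ 2 then some c.1 else none)
      (k + 1) (Fintype.card F)
      ρ ((Fintype.card F : ℝ) ^ (ρ * ((k : ℝ) + 1) - 1)) := by
  have : NeZero (2 : F) := ⟨Ring.two_ne_zero hchar.ne'⟩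
  have h := stmt11_general (nondegenerate_polarBilin_sumSquares (ι := Fin k) (K := F)) ρ
  rwa [coe_sumSquares, Module.finrank_fin_fun] at h
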